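/- In every universal Osborn loop Q the identity v^λ · (y · (v^λ\v)) = ((v^λ·y)/v^λ) · v holds for all y,v ∈ Q, where v^λ is the left inverse of v. -/

import Mathlib

/-- A loop: a set with multiplication, left division `ld`, right division `rd`
and a two-sided identity `e`. -/
structure LoopStr (Q : Type*) where
  mul : Q → Q → Q
  ld : Q → Q → Q
  rd : Q → Q → Q
  e : Q
  mul_ld : ∀ x y, mul x (ld x y) = y
  rd_mul : ∀ x y, mul (rd y x) x = y
  ld_mul : ∀ x y, ld x (mul x y) = y
  mul_rd : ∀ x y, rd (mul y x) x = y
  one_mul : ∀ x, mul e x = x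
  mul_one : ∀ x, mul x e = x

namespace LoopStr

variable {Q : Type*} (L : LoopStr Q)

/-- The left inverse `x^λ` of `x`, i.e. the unique element with `x^λ · x = e`. -/
def lam (x : Q) : Q := L.rd L.e x

/-- The right inverse `x^ρ` of `x`, i.e. the unique element with `x · x^ρ = e`. -/
def rho (x : Q) : Q := L.ld x L.e

/-- A binary operation `op` with identity `e'` is Osborn if, whenever `xl` is a
left inverse of `x` w.r.t. `op`, the Osborn identity
`x(yz·x) = (x(y·x^λ·x))·(zx)` holds. -/
def IsOsbornOp (op : Q → Q → Q) (e' : Q) : Prop :=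
  ∀ x y z xl, op xl x = e' →
    op x (op (op y z) x) = op (op x (op (op y xl) x)) (op z x)

/-- The `u,v`-principal isotope: `x ∗ y = (x/v)·(u\y)`; its identity is `u·v`. -/
def isotope (u v : Q) : Q → Q → Q := fun x y => L.mul (L.rd x v) (L.ld u y)

/-- `Q` is a universal Osborn loop: every `u,v`-principal isotope is Osborn. -/
def Universal : Prop := ∀ u v, IsOsbornOp (L.isotope u v) (L.mul u v)

/-- `Q` is a left universal Osborn loop: every left principal isotope
`x ∗ y = (x/v)·y` (identity `v`) is Osborn. -/
def LeftUniversal : Prop := ∀ v, IsOsbornOp (fun x y => L.mul (L.rd x v) y) v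

/-- `Q` is a right universal Osborn loop: every right principal isotope
`x ∗ y = x·(u\y)` (identity `u`) is Osborn. -/
def RightUniversal : Prop := ∀ u, IsOsbornOp (fun x y => L.mul x (L.ld u y)) u

end LoopStr

open LoopStr

/-!
In every Osborn loop `x · ((x^λ · z) · x) = z · x`, and the maps `z ↦ x · (z · x)` and
`z ↦ (x^λ · z) · x^λ` are mutually inverse. Applying the second map to the first identity gives
`(x^λ · (z · x)) · x^λ = x^λ · z`. Use this twice: in `Q` itself with `x = v`, and in the left
isotope `a ∗ b = (a/v) · b` with `x = v^λ\v`. Since `e ∗ b = v^λ · b`, the left inverse of `v^λ\v`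
with respect to `∗` is `e`, so the second use, with `z = y · v`, gives
`v^λ · (y · (v^λ\v)) = (v^λ · (y · v)) · v`, while the first, with `z = y`, gives
`v^λ · (y · v) = (v^λ · y)/v^λ`.
-/

namespace LoopStr

variable {Q : Type*} (L : LoopStr Q)

protected theorem mul_left_cancel {x y z : Q} (h : L.mul x y = L.mul x z) : y = z := by
  rw [← L.ld_mul x y, h, L.ld_mul]

protected theorem mul_right_cancel {x y z : Q} (h : L.mul x y = L.mul z y) : x = z := by
  rw [← L.mul_rd y x, h, L.mul_rd]

theorem one_ld (x : Q) : L.ld L.e x = x := by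
  simpa only [L.one_mul] using L.ld_mul L.e x

theorem one_rd (x : Q) : L.rd L.e x = L.lam x :=
  rfl

theorem rd_one (x : Q) : L.rd x L.e = x := by
  simpa only [L.mul_one] using L.mul_rd L.e x

theorem rd_self (x : Q) : L.rd x x = L.e := by
  simpa only [L.one_mul] using L.mul_rd x L.e

theorem rd_ld (x y : Q) : L.rd y (L.ld x y) = x := by
  simpa only [L.mul_ld] using L.mul_rd (L.ld x y) x

theorem lam_mul (x : Q) : L.mul (L.lam x) x = L.e :=
  L.rd_mul x L.e

/-- An Osborn loop: a loop whose own multiplication satisfies the Osborn identity. -/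
def IsOsborn : Prop := IsOsbornOp L.mul L.e

/-- The left principal isotope `x ∗ y = (x/v) · y` with its full loop structure. The identity and
multiplication are those in `LoopStr.LeftUniversal`, so that a left universal Osborn loop is one all
of whose `leftIsotope`s are Osborn. -/
def leftIsotope (v : Q) : LoopStr Q where
  mul x y := L.mul (L.rd x v) y
  ld x y := L.ld (L.rd x v) y
  rd y x := L.mul (L.rd y x) v
  e := v
  mul_ld x y := L.mul_ld (L.rd x v) y
  rd_mul x y := by rw [L.mul_rd, L.rd_mul]
  ld_mul x y := L.ld_mul (L.rd x v) y
  mul_rd x y := by rw [L.mul_rd, L.rd_mul]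
  one_mul x := by rw [L.rd_self, L.one_mul]
  mul_one x := L.rd_mul v x

theorem leftIsotope_mul (v x y : Q) : (L.leftIsotope v).mul x y = L.mul (L.rd x v) y :=
  rfl

theorem leftIsotope_lam (v x : Q) : (L.leftIsotope v).lam x = L.mul (L.rd v x) v :=
  rfl

theorem leftIsotope_lam_lam_ld (v : Q) :
    (L.leftIsotope v).lam (L.ld (L.lam v) v) = L.e := by
  rw [leftIsotope_lam, L.rd_ld, L.lam_mul]

variable {L}

theorem IsOsborn.mul_lam_mul_mul (h : L.IsOsborn) (x z : Q) :
    L.mul x (L.mul (L.mul (L.lam x) z) x) = L.mul z x := by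
  have osborn (z : Q) := h x (L.lam x) z (L.lam x) (L.lam_mul x)
  have conj_lam_mul_lam : L.mul x (L.mul (L.mul (L.lam x) (L.lam x)) x) = L.e := by
    apply L.mul_right_cancel (y := L.mul x x)
    rw [← osborn x, L.lam_mul, L.one_mul, L.one_mul]
  rw [osborn z, conj_lam_mul_lam, L.one_mul]

theorem IsOsborn.mul_mul_lam_mul_mul (h : L.IsOsborn) (x y : Q) :
    L.mul (L.mul x (L.mul (L.mul y (L.lam x)) x)) x = L.mul x (L.mul y x) := by
  simpa only [L.mul_one, L.one_mul] using (h x y L.e (L.lam x) (L.lam_mul x)).symm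

theorem IsOsborn.mul_lam_mul_mul_lam_mul (h : L.IsOsborn) (x z : Q) :
    L.mul x (L.mul (L.mul (L.mul (L.lam x) z) (L.lam x)) x) = z := by
  apply L.mul_right_cancel (y := x)
  rw [h.mul_mul_lam_mul_mul, h.mul_lam_mul_mul]

theorem IsOsborn.lam_mul_mul_mul_lam (h : L.IsOsborn) (x z : Q) :
    L.mul (L.mul (L.lam x) (L.mul z x)) (L.lam x) = L.mul (L.lam x) z := by
  apply L.mul_right_cancel (y := x)
  apply L.mul_left_cancel (x := x)
  rw [h.mul_lam_mul_mul_lam_mul, h.mul_lam_mul_mul]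

theorem Universal.leftUniversal (h : L.Universal) : L.LeftUniversal := by
  intro v
  simpa only [isotope, L.one_ld, L.one_mul, IsOsbornOp] using h L.e v

theorem LeftUniversal.isOsborn_leftIsotope (h : L.LeftUniversal) (v : Q) :
    (L.leftIsotope v).IsOsborn :=
  h v

theorem LeftUniversal.isOsborn (h : L.LeftUniversal) : L.IsOsborn := by
  simpa only [IsOsborn, L.rd_one] using h L.e

theorem LeftUniversal.lam_mul_mul_lam_ld (h : L.LeftUniversal) (y v : Q) :
    L.mul (L.lam v) (L.mul y (L.ld (L.lam v) v)) =
      L.mul (L.mul (L.lam v) (L.mul y v)) v := by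
  have conj_in_isotope : L.rd (L.mul (L.lam v) (L.mul y (L.ld (L.lam v) v))) v =
      L.mul (L.lam v) (L.mul y v) := by
    simpa only [leftIsotope_lam_lam_ld, leftIsotope_mul, one_rd, L.mul_rd, L.mul_one] using
      (h.isOsborn_leftIsotope v).lam_mul_mul_mul_lam (L.ld (L.lam v) v) (L.mul y v)
  rw [← conj_in_isotope, L.rd_mul]

end LoopStr

theorem universal_osborn_lam_identity_general {Q : Type*} (L : LoopStr Q)
    (h : L.LeftUniversal) (y v : Q) :
    L.mul (L.lam v) (L.mul y (L.ld (L.lam v) v)) =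
      L.mul (L.rd (L.mul (L.lam v) y) (L.lam v)) v := by
  rw [h.lam_mul_mul_lam_ld, ← h.isOsborn.lam_mul_mul_mul_lam v y, L.mul_rd]

theorem universal_osborn_lam_identity {Q : Type*} (L : LoopStr Q)
    (h : L.Universal) (y v : Q) :
    L.mul (L.lam v) (L.mul y (L.ld (L.lam v) v)) =
      L.mul (L.rd (L.mul (L.lam v) y) (L.lam v)) v := by
  exact universal_osborn_lam_identity_general L h.leftUniversal y v
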